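/- arXiv:1211.0671 — 2 statements merged into one kernel-verified Lean document; each statement's English description precedes it below -/
import Mathlib

section
/- (Lemma 3.2(2)) For every integer m ∈ ℤ and all natural numbers a, b ∈ ℕ, the following identity holds in ℚ(v): [[m ∣ a]] · [[m ∣ b]] = Σ_{c=0}^{min(a,b)} v^{2(b−c)(a−c)} · [[m ∣ a+b−c]] · [[a+b−c ; c, a−c, b−c]]. -/
open Finset

noncomputable section

/-- The field `ℚ(v)` of rational functions over `ℚ`. -/
abbrev K : Type := RatFunc ℚ

/-- The indeterminate `v`. -/
def v : K := RatFunc.X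

/-- `[[i]] = (v^{2i} - 1)/(v^2 - 1)`. -/
def qqint (i : ℤ) : K := (v ^ (2 * i) - 1) / (v ^ (2 : ℤ) - 1)

/-- `[[t]]! = [[1]][[2]]⋯[[t]]`. -/
def qqfact (t : ℕ) : K := ∏ s ∈ Finset.range t, qqint (s + 1)

/-- The Gaussian binomial coefficient `[[N ∣ t]] = ([[N]][[N-1]]⋯[[N-t+1]])/[[t]]!`. -/
def qqbinom (N : ℤ) (t : ℕ) : K := (∏ s ∈ Finset.range t, qqint (N - s)) / qqfact t

/-- The q-trinomial coefficient `[[a+b+c ; a, b, c]] = [[a+b+c]]!/([[a]]![[b]]![[c]]!)`. -/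
def qqtri (a b c : ℕ) : K := qqfact (a + b + c) / (qqfact a * qqfact b * qqfact c)

lemma v_ne : v ≠ 0 := RatFunc.X_ne_zero

lemma v_pow_ne (n : ℕ) (hn : 0 < n) : v ^ n - 1 ≠ 0 := by
  intro h
  have h1 : (algebraMap (Polynomial ℚ) (RatFunc ℚ)) (Polynomial.X ^ n - 1) = 0 := by
    rw [map_sub, map_pow, map_one, RatFunc.algebraMap_X]; exact h
  have h2 := (map_eq_zero_iff _ (RatFunc.algebraMap_injective ℚ)).1 h1
  have h3 := Polynomial.X_pow_sub_C_ne_zero hn (1 : ℚ)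
  rw [map_one] at h3
  exact h3 h2

lemma v_two_ne : v ^ (2 : ℤ) - 1 ≠ 0 := by
  exact_mod_cast v_pow_ne 2 (by norm_num)

lemma qqint_succ_ne (n : ℕ) : qqint (n + 1) ≠ 0 := by
  unfold qqint
  refine div_ne_zero ?_ v_two_ne
  have := v_pow_ne (2 * (n + 1)) (by omega)
  exact_mod_cast this

lemma qqint_zero : qqint 0 = 0 := by simp [qqint]

lemma qqint_add (x y : ℤ) : qqint (x + y) = qqint x + v ^ (2 * x) * qqint y := by
  unfold qqint
  have := v_two_ne
  rw [mul_add, zpow_add₀ v_ne]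
  field_simp
  ring

lemma qqfact_succ (n : ℕ) : qqfact (n + 1) = qqfact n * qqint (n + 1) := by
  unfold qqfact; rw [Finset.prod_range_succ]

lemma qqfact_zero : qqfact 0 = 1 := by simp [qqfact]

lemma qqfact_ne (n : ℕ) : qqfact n ≠ 0 := by
  unfold qqfact
  exact Finset.prod_ne_zero_iff.2 fun s _ => qqint_succ_ne s

def PP (m : ℤ) (n : ℕ) : K := ∏ s ∈ Finset.range n, qqint (m - s)

lemma PP_succ (m : ℤ) (n : ℕ) : PP m (n + 1) = PP m n * qqint (m - n) := by
  unfold PP; rw [Finset.prod_range_succ]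

def CC (a : ℕ) : ℕ → ℕ → K
  | 0, 0 => 1
  | 0, _ + 1 => 0
  | b + 1, 0 => v ^ (2 * (a : ℤ)) * CC a b 0
  | b + 1, c + 1 => v ^ (2 * ((a : ℤ) - (c + 1 : ℕ))) * CC a b (c + 1) + qqint ((a : ℤ) - c) * CC a b c

lemma CC_big (a b : ℕ) : ∀ c, b < c → CC a b c = 0 := by
  induction b with
  | zero => intro c hc; obtain ⟨c, rfl⟩ := Nat.exists_eq_succ_of_ne_zero hc.ne'; simp [CC]
  | succ b ih =>
    intro c hc
    obtain ⟨c, rfl⟩ : ∃ d, c = d + 1 := ⟨c - 1, by omega⟩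
    simp [CC, ih c (by omega), ih (c + 1) (by omega)]

lemma CC_big' (a b : ℕ) : ∀ c, a < c → CC a b c = 0 := by
  induction b with
  | zero => intro c hc; obtain ⟨c, rfl⟩ : ∃ d, c = d + 1 := ⟨c - 1, by omega⟩; simp [CC]
  | succ b ih =>
    intro c hc
    obtain ⟨c, rfl⟩ : ∃ d, c = d + 1 := ⟨c - 1, by omega⟩
    rcases Nat.lt_or_ge a c with h | h
    · simp [CC, ih c h, ih (c + 1) hc]
    · have : a = c := by omega
      subst this
      simp [CC, ih (a + 1) hc, qqint_zero]

lemma CC_closed (b : ℕ) : ∀ x y c : ℕ, b = c + y →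
    CC (c + x) b c * (qqfact c * qqfact x * qqfact y) =
      v ^ (2 * (x : ℤ) * y) * (qqfact (c + x) * qqfact b) := by
  induction b with
  | zero =>
    intro x y c h
    obtain ⟨rfl, rfl⟩ : c = 0 ∧ y = 0 := by omega
    simp [CC, qqfact_zero]
  | succ b ih =>
    intro x y c h
    rcases c with _ | c
    · obtain rfl : y = b + 1 := by omega
      have h1 := ih x b 0 (by omega)
      simp only [CC, Nat.zero_add] at h1 ⊢
      have e : v ^ (2 * (x : ℤ) * ((b + 1 : ℕ) : ℤ)) = v ^ (2 * (x : ℤ)) * v ^ (2 * (x : ℤ) * b) := by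
        rw [← zpow_add₀ v_ne]; congr 1; push_cast; ring
      rw [e, qqfact_succ b]
      linear_combination (v ^ (2 * (x : ℤ)) * qqint (b + 1)) * h1
    · have h2 := ih (x + 1) y c (by omega)
      rw [show c + (x + 1) = c + 1 + x by omega] at h2
      have h1 : CC (c + 1 + x) b (c + 1) * (qqfact (c + 1) * qqfact x * qqfact y) * v ^ (2 * (x : ℤ)) =
          v ^ (2 * (x : ℤ) * y) * (qqfact (c + 1 + x) * qqfact b) * qqint y := by
        rcases y with _ | y
        · rw [CC_big _ _ _ (by omega)]; simp [qqint_zero]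
        · have := ih x y (c + 1) (by omega)
          have e : v ^ (2 * (x : ℤ) * ((y + 1 : ℕ) : ℤ)) = v ^ (2 * (x : ℤ)) * v ^ (2 * (x : ℤ) * y) := by
            rw [← zpow_add₀ v_ne]; congr 1; push_cast; ring
          rw [e, qqfact_succ y]
          push_cast
          linear_combination (v ^ (2 * (x : ℤ)) * qqint (y + 1)) * this
      have e1 : ((c + 1 + x : ℕ) : ℤ) - (c + 1 : ℕ) = x := by push_cast; ring
      have e2 : ((c + 1 + x : ℕ) : ℤ) - c = x + 1 := by push_cast; ring
      have e3 : v ^ (2 * ((x + 1 : ℕ) : ℤ) * y) = v ^ (2 * (x : ℤ) * y) * v ^ (2 * (y : ℤ)) := by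
        rw [← zpow_add₀ v_ne]; congr 1; push_cast; ring
      have e4 : qqint ((b : ℤ) + 1) = qqint y + v ^ (2 * (y : ℤ)) * qqint (c + 1) := by
        rw [← qqint_add]; congr 1; omega
      simp only [CC]
      rw [e1, e2, qqfact_succ b, e4]
      rw [e3, qqfact_succ x] at h2
      rw [qqfact_succ c] at h1 ⊢
      linear_combination h1 + qqint (c + 1) * h2

lemma PP_mul (m : ℤ) (a b : ℕ) :
    PP m a * PP m b = ∑ c ∈ Finset.range (b + 1), CC a b c * PP m (a + b - c) := by
  induction b with
  | zero => simp [CC, PP]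
  | succ b ih =>
    rw [PP_succ, ← mul_assoc, ih, Finset.sum_mul]
    have key : ∀ c ∈ Finset.range (b + 1), CC a b c * PP m (a + b - c) * qqint (m - b) =
        v ^ (2 * ((a : ℤ) - c)) * CC a b c * PP m (a + (b + 1) - c) +
          qqint ((a : ℤ) - c) * CC a b c * PP m (a + b - c) := by
      intro c hc
      have hc' := Finset.mem_range.1 hc
      rw [show a + (b + 1) - c = (a + b - c) + 1 by omega, PP_succ]
      have : m - b = ((a : ℤ) - c) + (m - ((a + b - c : ℕ) : ℤ)) := by omega
      rw [this, qqint_add]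
      ring
    rw [Finset.sum_congr rfl key, Finset.sum_add_distrib]
    rw [Finset.sum_range_succ' (fun c => CC a (b + 1) c * PP m (a + (b + 1) - c))]
    have s1 : ∑ c ∈ Finset.range (b + 1), v ^ (2 * ((a : ℤ) - c)) * CC a b c * PP m (a + (b + 1) - c)
        = ∑ c ∈ Finset.range (b + 1 + 1), v ^ (2 * ((a : ℤ) - c)) * CC a b c * PP m (a + (b + 1) - c) := by
      rw [Finset.sum_range_succ _ (b + 1), CC_big a b (b + 1) (by omega)]; simp
    rw [s1, Finset.sum_range_succ', add_right_comm, ← Finset.sum_add_distrib]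
    congr 1
    · refine Finset.sum_congr rfl fun c _ => ?_
      rw [show a + (b + 1) - (c + 1) = a + b - c by omega]
      simp only [CC]
      ring

/-- Lemma 3.2(2):
`[[m ∣ a]]·[[m ∣ b]] = ∑_{c=0}^{min(a,b)} v^{2(b-c)(a-c)} [[m ∣ a+b-c]] [[a+b-c ; c, a-c, b-c]]`. -/
theorem lemma_3_2_2 (m : ℤ) (a b : ℕ) :
    qqbinom m a * qqbinom m b =
      ∑ c ∈ Finset.range (min a b + 1),
        v ^ (2 * ((b : ℤ) - (c : ℤ)) * ((a : ℤ) - (c : ℤ))) * qqbinom m (a + b - c) *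
          qqtri c (a - c) (b - c) := by
  have ha := qqfact_ne a
  have hb := qqfact_ne b
  have hs : ∑ c ∈ Finset.range (min a b + 1), CC a b c * PP m (a + b - c) =
      ∑ c ∈ Finset.range (b + 1), CC a b c * PP m (a + b - c) := by
    apply Finset.sum_subset
    · intro c hc
      simp only [Finset.mem_range] at hc ⊢
      omega
    · intro c hc hc'
      simp only [Finset.mem_range] at hc hc'
      rw [CC_big' a b c (by omega), zero_mul]
  have h : qqbinom m a * qqbinom m b = (PP m a * PP m b) / (qqfact a * qqfact b) := by
    unfold qqbinom PP
    rw [div_mul_div_comm]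
  rw [h, PP_mul, ← hs, Finset.sum_div]
  refine Finset.sum_congr rfl fun c hc => ?_
  have hc' := Finset.mem_range.1 hc
  obtain ⟨x, rfl⟩ : ∃ x, a = c + x := ⟨a - c, by omega⟩
  obtain ⟨y, rfl⟩ : ∃ y, b = c + y := ⟨b - c, by omega⟩
  have hC := CC_closed (c + y) x y c rfl
  have e1 : c + x + (c + y) - c = c + x + y := by omega
  have e2 : c + x - c = x := by omega
  have e3 : c + y - c = y := by omega
  have e4 : 2 * (((c + y : ℕ) : ℤ) - c) * (((c + x : ℕ) : ℤ) - c) = 2 * (x : ℤ) * y := by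
    push_cast; ring
  rw [e1, e2, e3, e4]
  have h1 := qqfact_ne c
  have h2 := qqfact_ne x
  have h3 := qqfact_ne y
  have h4 := qqfact_ne (c + x + y)
  have hq : qqbinom m (c + x + y) = PP m (c + x + y) / qqfact (c + x + y) := rfl
  rw [hq, qqtri, div_eq_iff (mul_ne_zero ha hb)]
  have hC' := eq_div_of_mul_eq (mul_ne_zero (mul_ne_zero h1 h2) h3) hC
  rw [hC']
  field_simp
end
end

section
/- (Corollary 3.3(2)) Let n ≥ 1. For all λ, μ ∈ ℕⁿ and every α ∈ ℤⁿ, the following identity holds in ℚ(v): [α ∣ λ] · [α ∣ μ] = Σ_{γ ∈ ℕⁿ, γ ≤ λ, γ ≤ μ} v^{λ·μ − α·γ} · (∏_{i=1}^n [λ_i+μ_i−γ_i ; γ_i, λ_i−γ_i, μ_i−γ_i]) · [α ∣ λ+μ−γ]. -/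
open Finset

noncomputable section

/-- `[i] = (v^i - v^{-i})/(v - v^{-1})`. -/
def qint (i : ℤ) : K := (v ^ i - v ^ (-i)) / (v - v⁻¹)

/-- `[t]! = [1][2]⋯[t]`. -/
def qfact (t : ℕ) : K := ∏ s ∈ Finset.range t, qint (s + 1)

/-- The Gaussian binomial coefficient `[N ∣ t] = ([N][N-1]⋯[N-t+1])/[t]!`. -/
def qbinom (N : ℤ) (t : ℕ) : K := (∏ s ∈ Finset.range t, qint (N - s)) / qfact t

/-- The q-trinomial coefficient `[a+b+c ; a, b, c] = [a+b+c]!/([a]![b]![c]!)`. -/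
def qtri (a b c : ℕ) : K := qfact (a + b + c) / (qfact a * qfact b * qfact c)

/-- `[μ ∣ λ] = ∏ i, [μ i ∣ λ i]` for `μ ∈ ℤⁿ`, `λ ∈ ℕⁿ`. -/
def qbinomV {n : ℕ} (μ : Fin n → ℤ) (lam : Fin n → ℕ) : K := ∏ i, qbinom (μ i) (lam i)

/-- `μ · δ = ∑ i, μ i * δ i`. -/
def dotZ {n : ℕ} (a b : Fin n → ℤ) : ℤ := ∑ i, a i * b i

lemma v_pow_ne_one (n : ℕ) (hn : n ≠ 0) : v ^ n ≠ 1 := by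
  intro h
  have h1 : (algebraMap (Polynomial ℚ) (RatFunc ℚ)) (Polynomial.X ^ n) =
      algebraMap (Polynomial ℚ) (RatFunc ℚ) 1 := by
    rw [map_pow, map_one, RatFunc.algebraMap_X]; exact h
  have h2 := RatFunc.algebraMap_injective ℚ h1
  have h3 := congrArg Polynomial.natDegree h2
  simp at h3
  exact hn h3

lemma v_sub_ne (n : ℕ) (hn : n ≠ 0) : v ^ (n : ℤ) - v ^ (-(n : ℤ)) ≠ 0 := by
  intro h
  have h1 := sub_eq_zero.1 h
  apply v_pow_ne_one (n + n) (by omega)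
  rw [pow_add]
  rw [zpow_neg, zpow_natCast] at h1
  have := pow_ne_zero n v_ne
  nth_rw 1 [h1]
  exact inv_mul_cancel₀ this

lemma v_den : v - v⁻¹ ≠ 0 := by
  have := v_sub_ne 1 (by omega)
  simpa using this

lemma qint_ne (n : ℕ) : qint ((n : ℤ) + 1) ≠ 0 := by
  have := v_sub_ne (n + 1) (by omega)
  push_cast at this
  exact div_ne_zero this v_den

lemma qfact_ne (t : ℕ) : qfact t ≠ 0 :=
  Finset.prod_ne_zero_iff.2 fun s _ => qint_ne s

lemma qfact_succ (t : ℕ) : qfact (t + 1) = qfact t * qint (t + 1) := by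
  simp [qfact, Finset.prod_range_succ]

def qfall (N : ℤ) (t : ℕ) : K := ∏ s ∈ Finset.range t, qint (N - s)

lemma qbinom_eq (N : ℤ) (t : ℕ) : qbinom N t = qfall N t / qfact t := rfl

lemma qfall_add (N : ℤ) (s t : ℕ) : qfall N (s + t) = qfall N s * qfall (N - s) t := by
  unfold qfall
  rw [Finset.prod_range_add]
  congr 1
  apply Finset.prod_congr rfl
  intro x _
  congr 1
  push_cast
  ring

lemma qfall_one (N : ℤ) : qfall N 1 = qint N := by simp [qfall]

lemma qbinom_zero (N : ℤ) : qbinom N 0 = 1 := by simp [qbinom, qfact]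

lemma qint_pascal (N : ℤ) (t : ℕ) :
    qint (N + 1) = v ^ ((t : ℤ) + 1) * qint (N - t) + v ^ ((t : ℤ) - N) * qint (t + 1) := by
  unfold qint
  rw [← mul_div_assoc, ← mul_div_assoc, ← add_div]
  congr 1
  rw [mul_sub, mul_sub]
  simp only [← zpow_add₀ v_ne]
  ring_nf

lemma pascal (N : ℤ) (t : ℕ) :
    qbinom (N + 1) (t + 1) =
      v ^ ((t : ℤ) + 1) * qbinom N (t + 1) + v ^ ((t : ℤ) - N) * qbinom N t := by
  simp only [qbinom_eq]
  have h1 : qfall (N + 1) (t + 1) = qint (N + 1) * qfall N t := by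
    rw [add_comm t 1, qfall_add, qfall_one]; simp
  have h2 : qfall N (t + 1) = qfall N t * qint (N - t) := by
    rw [qfall_add, qfall_one]
  rw [h1, h2, qint_pascal N t, qfact_succ]
  have := qfact_ne t
  have := qint_ne t
  field_simp

lemma qfall_nat (l : ℕ) : qfall l l = qfact l := by
  unfold qfall qfact
  rw [← Finset.prod_range_reflect]
  apply Finset.prod_congr rfl
  intro x hx
  have := Finset.mem_range.1 hx
  congr 1
  omega

lemma qbinom_nat_zero (l c : ℕ) (h : l < c) : qbinom l c = 0 := by
  rw [qbinom_eq, div_eq_zero_iff]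
  left
  exact Finset.prod_eq_zero (Finset.mem_range.2 h) (by simp [qint])

lemma qbinom_nat (l c : ℕ) (h : c ≤ l) : qbinom l c = qfact l / (qfact c * qfact (l - c)) := by
  obtain ⟨d, rfl⟩ := Nat.exists_eq_add_of_le h
  have h1 := qfall_add ((c + d : ℕ) : ℤ) c d
  rw [qfall_nat] at h1
  have h2 : (((c + d : ℕ) : ℤ) - c) = d := by push_cast; ring
  rw [h2, qfall_nat] at h1
  rw [qbinom_eq, h1, Nat.add_sub_cancel_left]
  have := qfact_ne c
  have := qfact_ne d
  field_simp

lemma vandermonde (y : ℤ) (l : ℕ) : ∀ m : ℕ, qbinom (l + y) m =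
    ∑ c ∈ Finset.range (m + 1),
      v ^ ((l : ℤ) * ((m : ℤ) - c) - y * c) * qbinom l c * qbinom y (m - c) := by
  induction l with
  | zero =>
    intro m
    rw [Finset.sum_range_succ', Finset.sum_eq_zero]
    · simp [qbinom_zero]
    · intro c _
      rw [qbinom_nat_zero 0 (c + 1) (by omega)]
      simp
  | succ l ih =>
    intro m
    cases m with
    | zero => simp [qbinom_zero]
    | succ m =>
      have e : (((l + 1 : ℕ) : ℤ) + y) = (l + y) + 1 := by push_cast; ring
      rw [e, pascal, ih (m + 1), ih m, Finset.sum_range_succ' _ (m + 1),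
        Finset.sum_range_succ' _ (m + 1), mul_add, Finset.mul_sum, Finset.mul_sum,
        add_right_comm, ← Finset.sum_add_distrib]
      congr 1
      · apply Finset.sum_congr rfl
        intro c _
        have e2 : ((l + 1 : ℕ) : ℤ) = (l : ℤ) + 1 := by push_cast; ring
        rw [e2, pascal, Nat.add_sub_add_right]
        simp only [mul_add, add_mul, ← mul_assoc, ← zpow_add₀ v_ne]
        push_cast
        ring_nf
      · simp only [qbinom_zero, ← mul_assoc, ← zpow_add₀ v_ne]
        push_cast
        ring_nf

lemma one_dim (a : ℤ) (l m : ℕ) : qbinom a l * qbinom a m =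
    ∑ c ∈ Finset.Iic l ∩ Finset.Iic m,
      v ^ ((l : ℤ) * m - a * c) * qtri c (l - c) (m - c) * qbinom a (l + m - c) := by
  have h := vandermonde (a - l) l m
  rw [add_sub_cancel] at h
  rw [h, Finset.mul_sum]
  symm
  apply Finset.sum_subset_zero_on_sdiff
  · intro c hc
    simp at hc ⊢
    omega
  · intro c hc
    simp at hc
    rw [qbinom_nat_zero l c (by omega)]
    simp
  · intro c hc
    simp at hc
    obtain ⟨h1, h2⟩ := hc
    rw [qbinom_nat l c h1]
    have e1 : l + m - c = l + (m - c) := by omega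
    have e2 : c + (l - c) + (m - c) = l + (m - c) := by omega
    have e3 : (l : ℤ) * ((m : ℤ) - c) - (a - l) * c = l * m - a * c := by ring
    rw [e3, qtri, e1, e2]
    simp only [qbinom_eq]
    rw [qfall_add]
    have := qfact_ne l
    have := qfact_ne c
    have := qfact_ne (l - c)
    have := qfact_ne (m - c)
    have := qfact_ne (l + (m - c))
    field_simp

lemma v_zpow_sum {n : ℕ} (f : Fin n → ℤ) : v ^ (∑ i, f i) = ∏ i, v ^ f i := by
  induction n with
  | zero => simp
  | succ n ih => rw [Fin.sum_univ_succ, Fin.prod_univ_succ, zpow_add₀ v_ne, ih]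

/-- Corollary 3.3(2):
`[α ∣ λ]·[α ∣ μ] = ∑_{γ ≤ λ, γ ≤ μ} v^{λ·μ - α·γ}
  (∏ i, [λ_i+μ_i-γ_i ; γ_i, λ_i-γ_i, μ_i-γ_i]) [α ∣ λ+μ-γ]`. -/
theorem corollary_3_3_2 (n : ℕ) (hn : 1 ≤ n) (lam μ : Fin n → ℕ) (α : Fin n → ℤ) :
    qbinomV α lam * qbinomV α μ =
      ∑ γ ∈ Finset.Iic lam ∩ Finset.Iic μ,
        v ^ (dotZ (fun i => (lam i : ℤ)) (fun i => (μ i : ℤ)) -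
              dotZ α (fun i => (γ i : ℤ))) *
          (∏ i, qtri (γ i) (lam i - γ i) (μ i - γ i)) *
          qbinomV α (fun i => lam i + μ i - γ i) := by
  have hs : Finset.Iic lam ∩ Finset.Iic μ =
      Fintype.piFinset fun i => Finset.Iic (lam i) ∩ Finset.Iic (μ i) := by
    ext γ
    simp [Pi.le_def, forall_and]
  unfold qbinomV dotZ
  rw [← Finset.prod_mul_distrib, Finset.prod_congr rfl fun i _ => one_dim (α i) (lam i) (μ i),
    Finset.prod_univ_sum, hs]
  apply Finset.sum_congr rfl
  intro γ _
  rw [← Finset.sum_sub_distrib, v_zpow_sum, Finset.prod_mul_distrib, Finset.prod_mul_distrib]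
end
end
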